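/- Let A be an n×n complex matrix all of whose principal minors (over all nonempty index subsets) are real and all of whose leading principal minors are positive. Then there exists an n×n real diagonal matrix D with positive diagonal entries such that all eigenvalues of D·A are real, positive and simple. -/

import Mathlib

open Matrix Polynomial

/-!
Up to sign, the coefficients of the characteristic polynomial of `diagonal d * A` are sums of
principal minors of `A` weighted by products of the `d i`. So this polynomial is determined by `d`
and the real set function of principal minors, and its roots can be studied over `ℝ`.

Choose the `d i` one at a time. With the new weight `d a = 0` the polynomial is `X` times the
previous one, so its roots are the previous ones, which are positive and simple, together with a
simple root at `0`. For small `d a > 0` the simple roots move continuously and hence stay distinct,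
and the previous ones stay positive. The product of all roots is the product of the weights times a
leading principal minor, hence positive, so the root that started at `0` has become positive too.
-/

open Filter Topology Function Finset Lagrange

section RootPerturbation

variable {𝕜 ι : Type*} [NontriviallyNormedField 𝕜] [CompleteSpace 𝕜]

theorem exists_tendsto_isRoot_add_C_mul {P : 𝕜[X]} {x : 𝕜} (hP : P.IsRoot x)
    (hP' : P.derivative.eval x ≠ 0) (Q : 𝕜[X]) :
    ∃ φ : 𝕜 → 𝕜, Tendsto φ (𝓝 0) (𝓝 x) ∧ ∀ᶠ ε in 𝓝 0, (P + C ε * Q).IsRoot (φ ε) := by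
  have heval (R : 𝕜[X]) : HasStrictFDerivAt (fun z : 𝕜 × 𝕜 => R.eval z.2)
      (R.derivative.eval x • .snd 𝕜 𝕜 𝕜) (0, x) :=
    HasStrictDerivAt.comp_hasStrictFDerivAt (h₂ := R.eval) (f := Prod.snd) _
      (R.hasStrictDerivAt x) hasStrictFDerivAt_snd
  have hf : HasStrictFDerivAt (fun z : 𝕜 × 𝕜 => P.eval z.2 + z.1 * Q.eval z.2)
      (P.derivative.eval x • .snd 𝕜 𝕜 𝕜 + Q.eval x • .fst 𝕜 𝕜 𝕜) (0, x) :=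
    ((heval P).fun_add (hasStrictFDerivAt_fst.fun_mul (heval Q))).congr_fderiv (by ext <;> simp)
  have hpartial : ((P.derivative.eval x • .snd 𝕜 𝕜 𝕜 + Q.eval x • .fst 𝕜 𝕜 𝕜) ∘L
      .inr 𝕜 𝕜 𝕜 : 𝕜 →L[𝕜] 𝕜).IsInvertible :=
    ⟨ContinuousLinearEquiv.unitsEquivAut 𝕜 (Units.mk0 _ hP'), by ext; simp⟩
  refine ⟨hf.implicitFunctionOfProdDomain hpartial,
    hf.tendsto_implicitFunctionOfProdDomain hpartial, ?_⟩
  filter_upwards [hf.eventually_apply_implicitFunctionOfProdDomain hpartial] with ε hε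
  simpa [hP.eq_zero] using hε

theorem exists_tendsto_nodal_add_C_mul {s : Finset ι} {r : ι → 𝕜}
    (hr : Set.InjOn r s) {Q : 𝕜[X]} (hQ : Q.degree < #s) :
    ∃ ν : ι → 𝕜 → 𝕜, (∀ i ∈ s, Tendsto (ν i) (𝓝 0) (𝓝 (r i))) ∧
      ∀ᶠ ε in 𝓝 0, Set.InjOn (ν · ε) s ∧
        nodal s r + C ε * Q = nodal s (ν · ε) := by
  have hroot : ∀ i ∈ s, (nodal s r).IsRoot (r i) := fun i hi => eval_nodal_at_node hi
  have hsimple : ∀ i ∈ s, (nodal s r).derivative.eval (r i) ≠ 0 := fun i hi =>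
    (separable_prod_X_sub_C_iff'.2 hr).eval₂_derivative_ne_zero (RingHom.id 𝕜) (hroot i hi)
  choose! ν hν hνroot using fun i hi =>
    exists_tendsto_isRoot_add_C_mul (hroot i hi) (hsimple i hi) Q
  refine ⟨ν, hν, ?_⟩
  have hinj : ∀ᶠ ε in 𝓝 0, Set.InjOn (ν · ε) s := by
    simp_rw [Set.InjOn, mem_coe, eventually_all_finset]
    intro i hi j hj
    by_cases hij : i = j
    · exact .of_forall fun _ _ => hij
    · filter_upwards [((hν i hi).sub (hν j hj)).eventually_ne
        (sub_ne_zero.2 (hr.ne hi hj hij))] with ε hne heq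
      exact absurd heq (sub_ne_zero.1 hne)
  filter_upwards [hinj, (eventually_all_finset s).2 hνroot] with ε hε hεroot
  refine ⟨hε, ?_⟩
  have hdeg : (C ε * Q).degree < (nodal s r).degree := by
    rw [degree_nodal]
    exact (smul_eq_C_mul (R := 𝕜) ε ▸ degree_smul_le ε Q).trans_lt hQ
  refine eq_of_degree_le_of_eval_index_eq s hε ?_ ?_ ?_ fun i hi => ?_
  · rw [degree_add_eq_left_of_degree_lt hdeg, degree_nodal]
  · rw [degree_add_eq_left_of_degree_lt hdeg, degree_nodal, degree_nodal]
  · rw [leadingCoeff_add_of_degree_lt' hdeg, nodal_monic, nodal_monic]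
  · exact (hεroot i hi).trans (eval_nodal_at_node (v := (ν · ε)) hi).symm

end RootPerturbation

section MinorPoly

variable {ι R : Type*} [DecidableEq ι] [CommRing R]

/-- The characteristic polynomial that the rows and columns in `s` of `diagonal d * A` would have
if `m` gave the principal minors of `A`. Nothing is assumed about `m`, which need not come from a
matrix. The signs `(-1) ^ #t` are absorbed into the products of the `-d i`. -/
noncomputable def minorPoly (m : Finset ι → R) (d : ι → R) (s : Finset ι) : R[X] :=
  ∑ t ∈ s.powerset, C (m t * ∏ i ∈ t, -d i) * X ^ #(s \ t)

theorem minorPoly_map {K : Type*} [CommRing K] (f : R →+* K) (m : Finset ι → R) (d : ι → R)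
    (s : Finset ι) : (minorPoly m d s).map f = minorPoly (f ∘ m) (f ∘ d) s := by
  simp [minorPoly, Polynomial.map_sum, Polynomial.map_prod]

theorem minorPoly_update_of_notMem {a : ι} {s : Finset ι} (ha : a ∉ s) (m : Finset ι → R)
    (d : ι → R) (x : R) : minorPoly m (update d a x) s = minorPoly m d s := by
  refine sum_congr rfl fun t ht => ?_
  have hat : ∀ i ∈ t, i ≠ a := fun i hi => ne_of_mem_of_not_mem (mem_powerset.1 ht hi) ha
  rw [prod_congr rfl fun i hi => by rw [update_of_ne (hat i hi)]]

theorem minorPoly_insert {a : ι} {s : Finset ι} (ha : a ∉ s) (m : Finset ι → R) (d : ι → R) :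
    minorPoly m d (insert a s) =
      X * minorPoly m d s - C (d a) * minorPoly (fun t => m (insert a t)) d s := by
  have hwithout : ∑ t ∈ s.powerset, C (m t * ∏ i ∈ t, -d i) * X ^ #(insert a s \ t) =
      X * minorPoly m d s := by
    rw [minorPoly, mul_sum]
    refine sum_congr rfl fun t ht => ?_
    rw [insert_sdiff_of_notMem _ (notMem_mono (mem_powerset.1 ht) ha),
      card_insert_of_notMem (by simp [ha])]
    ring
  have hwith : ∑ t ∈ s.powerset,
        C (m (insert a t) * ∏ i ∈ insert a t, -d i) * X ^ #(insert a s \ insert a t) =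
      -(C (d a) * minorPoly (fun t => m (insert a t)) d s) := by
    rw [minorPoly, mul_sum, ← sum_neg_distrib]
    refine sum_congr rfl fun t ht => ?_
    rw [insert_sdiff_insert, sdiff_insert_of_notMem ha,
      prod_insert (notMem_mono (mem_powerset.1 ht) ha)]
    simp only [map_mul, map_neg]
    ring
  rw [minorPoly, sum_powerset_insert ha, hwithout, hwith, sub_eq_add_neg]

theorem degree_minorPoly_le (m : Finset ι → R) (d : ι → R) (s : Finset ι) :
    (minorPoly m d s).degree ≤ #s :=
  (degree_sum_le _ _).trans <| Finset.sup_le fun t _ => (degree_C_mul_X_pow_le _ _).trans <| by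
    exact_mod_cast card_le_card sdiff_subset

theorem eval_zero_minorPoly (m : Finset ι → R) (d : ι → R) (s : Finset ι) :
    (minorPoly m d s).eval 0 = m s * ∏ i ∈ s, -d i := by
  rw [minorPoly, eval_finsetSum, sum_eq_single_of_mem s (mem_powerset_self s)]
  · simp [eval_prod]
  · intro t ht hts
    have : #(s \ t) ≠ 0 := by
      rw [card_ne_zero, sdiff_nonempty]
      exact fun hst => hts ((mem_powerset.1 ht).antisymm hst)
    simp [this]

theorem mul_prod_eq_prod_of_minorPoly_eq_nodal {m : Finset ι → R} {d μ : ι → R} {s : Finset ι}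
    (h : minorPoly m d s = nodal s μ) : m s * ∏ i ∈ s, d i = ∏ i ∈ s, μ i := by
  have h0 := congrArg (Polynomial.eval 0) h
  simp only [eval_zero_minorPoly, eval_nodal, zero_sub, prod_neg] at h0
  rw [mul_left_comm] at h0
  exact (isUnit_one.neg.pow #s).mul_left_cancel h0

theorem minorPoly_update_insert_eq_nodal_add {a : ι} {s : Finset ι} (ha : a ∉ s)
    {m : Finset ι → R} {d μ : ι → R} (hμ : minorPoly m d s = nodal s μ) (ε : R) :
    minorPoly m (update d a ε) (insert a s) =
      nodal (insert a s) (update μ a 0) + C ε * -minorPoly (fun t => m (insert a t)) d s := by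
  have hnodal : nodal s (update μ a 0) = nodal s μ :=
    prod_congr rfl fun i hi => by rw [update_of_ne (ne_of_mem_of_not_mem hi ha)]
  rw [minorPoly_insert ha, minorPoly_update_of_notMem ha, minorPoly_update_of_notMem ha, hμ,
    nodal_insert_eq_nodal ha, hnodal]
  simp [sub_eq_add_neg]

end MinorPoly

section SimplePosRoots

variable {ι : Type*}

/-- `P` is monic with as many simple positive roots as `s` has elements, and no others; the roots
are indexed by `s` so that they can be matched with the weights. -/
def HasSimplePosRoots (P : ℝ[X]) (s : Finset ι) : Prop :=
  ∃ μ : ι → ℝ, Set.InjOn μ s ∧ (∀ i ∈ s, 0 < μ i) ∧ P = nodal s μ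

variable [DecidableEq ι]

theorem exists_hasSimplePosRoots_minorPoly_insert {m : Finset ι → ℝ} {d : ι → ℝ} {s : Finset ι}
    {a : ι} (ha : a ∉ s) (hd : ∀ i ∈ s, 0 < d i) (hm : 0 < m (insert a s))
    (hs : HasSimplePosRoots (minorPoly m d s) s) :
    ∃ ε > 0, HasSimplePosRoots (minorPoly m (update d a ε) (insert a s)) (insert a s) := by
  obtain ⟨μ, hμinj, hμpos, hμ⟩ := hs
  have hr : ∀ i ∈ s, update μ a 0 i = μ i := fun i hi =>
    update_of_ne (ne_of_mem_of_not_mem hi ha) _ _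
  have hr_inj : Set.InjOn (update μ a 0) ↑(insert a s) := by
    rw [coe_insert, Set.injOn_insert (mem_coe.not.2 ha), update_self]
    refine ⟨hμinj.congr fun i hi => (hr i hi).symm, ?_⟩
    rintro ⟨i, hi, hi0⟩
    exact (hμpos i hi).ne' ((hr i hi).symm.trans hi0)
  have hdeg : (-minorPoly (fun t => m (insert a t)) d s).degree < #(insert a s) := by
    rw [degree_neg, card_insert_of_notMem ha]
    exact (degree_minorPoly_le _ _ _).trans_lt (by exact_mod_cast Nat.lt_succ_self _)
  obtain ⟨ν, hν, hνroots⟩ := exists_tendsto_nodal_add_C_mul hr_inj hdeg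
  have hνpos : ∀ᶠ ε in 𝓝 0, ∀ i ∈ s, 0 < ν i ε := (eventually_all_finset s).2 fun i hi =>
    (hν i (mem_insert_of_mem hi)).eventually_const_lt (by rw [hr i hi]; exact hμpos i hi)
  obtain ⟨ε, ⟨⟨hεinj, hεprod⟩, hεpos⟩, hε⟩ :=
    ((hνroots.and hνpos).filter_mono nhdsWithin_le_nhds |>.and
      (self_mem_nhdsWithin (s := Set.Ioi 0))).exists
  rw [← minorPoly_update_insert_eq_nodal_add ha hμ] at hεprod
  have hprod : 0 < ∏ i ∈ insert a s, ν i ε := by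
    rw [← mul_prod_eq_prod_of_minorPoly_eq_nodal hεprod, prod_insert ha, update_self,
      prod_update_of_notMem ha]
    exact mul_pos hm (mul_pos hε (prod_pos hd))
  have hapos : 0 < ν a ε := by
    rw [prod_insert ha] at hprod
    exact pos_of_mul_pos_left hprod (prod_nonneg fun i hi => (hεpos i hi).le)
  exact ⟨ε, hε, (ν · ε), hεinj, (forall_mem_insert _ _ _).2 ⟨hapos, hεpos⟩, hεprod⟩

theorem exists_pos_hasSimplePosRoots_minorPoly {ι : Type*} [LinearOrder ι] {m : Finset ι → ℝ}
    (hm_empty : m ∅ = 1) (s : Finset ι) (hm : ∀ a ∈ s, 0 < m {i ∈ s | i ≤ a}) :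
    ∃ d : ι → ℝ, (∀ i, 0 < d i) ∧ HasSimplePosRoots (minorPoly m d s) s := by
  induction s using Finset.induction_on_max with
  | empty => exact ⟨1, fun _ => one_pos, 1, by simp, by simp, by simp [minorPoly, hm_empty]⟩
  | insert a s hlt ih =>
    have ha : a ∉ s := fun h => (hlt a h).false
    obtain ⟨d, hd, hs⟩ := ih fun b hb => by
      simpa [filter_insert, (hlt b hb).not_ge] using hm b (mem_insert_of_mem hb)
    have hma : 0 < m (insert a s) := by
      simpa [filter_insert, filter_true_of_mem fun i hi => (hlt i hi).le] using
        hm a (mem_insert_self a s)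
    obtain ⟨ε, hε, hroots⟩ := exists_hasSimplePosRoots_minorPoly_insert ha (fun i _ => hd i) hma hs
    exact ⟨update d a ε, (forall_update_iff d fun _ x => 0 < x).2 ⟨hε, fun i _ => hd i⟩, hroots⟩

end SimplePosRoots

section PrincipalMinor

variable {ι R : Type*} [DecidableEq ι] [CommRing R]

/-- The principal minor of `A` on the rows and columns in `S`. Here `S = ∅` is allowed, so that
the principal minors form a set function that is total on `Finset ι`. -/
def principalMinor (A : Matrix ι ι R) (S : Finset ι) : R :=
  (A.submatrix (fun i : S => (i : ι)) (fun i : S => (i : ι))).det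

theorem principalMinor_empty (A : Matrix ι ι R) : principalMinor A ∅ = 1 :=
  det_isEmpty

theorem principalMinor_Iic {n : ℕ} (A : Matrix (Fin n) (Fin n) R) (k : Fin n) :
    principalMinor A (Finset.Iic k) =
      (A.submatrix (Fin.castLE k.isLt) (Fin.castLE k.isLt)).det := by
  let e : Fin (k + 1) ≃ Finset.Iic k :=
    { toFun := fun i => ⟨Fin.castLE k.isLt i, by simpa [Fin.le_def] using i.is_le⟩
      invFun := fun i => ⟨i.1, Nat.lt_succ_of_le (Fin.le_def.1 (Finset.mem_Iic.1 i.2))⟩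
      left_inv := fun _ => rfl
      right_inv := fun _ => rfl }
  rw [principalMinor, ← det_submatrix_equiv_self e]
  rfl

variable [Fintype ι]

theorem principalMinor_diagonal_mul (d : ι → R) (A : Matrix ι ι R) (S : Finset ι) :
    principalMinor (diagonal d * A) S = principalMinor A S * ∏ i ∈ S, d i := by
  have hsub : (diagonal d * A).submatrix (fun i : S => (i : ι)) (fun i : S => (i : ι)) =
      diagonal (fun i : S => d i) * A.submatrix (fun i : S => (i : ι)) (fun i : S => (i : ι)) := by
    ext i j
    simp [diagonal_mul]
  rw [principalMinor, hsub, det_mul, det_diagonal, prod_coe_sort S d, mul_comm, principalMinor]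

theorem charpoly_eq_minorPoly (A : Matrix ι ι R) :
    A.charpoly = minorPoly (principalMinor A) 1 univ := by
  nontriviality R
  set N := Fintype.card ι
  calc A.charpoly
    _ = ∑ k ∈ range (N + 1), C (A.charpoly.coeff (N - k)) * X ^ (N - k) := by
      conv_lhs => rw [A.charpoly.as_sum_range_C_mul_X_pow, charpoly_natDegree_eq_dim,
        ← sum_range_reflect]
      simp [N]
    _ = ∑ k ∈ range (N + 1), ∑ t ∈ powersetCard k univ,
          C (principalMinor A t * ∏ i ∈ t, -1) * X ^ #(univ \ t) := by
      refine sum_congr rfl fun k hk => ?_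
      rw [charpoly_coeff_eq_sum_minors _ _ (mem_range_succ_iff.1 hk), mul_sum, map_sum, sum_mul]
      refine sum_congr rfl fun t ht => ?_
      rw [prod_const, card_univ_sdiff, (mem_powersetCard.1 ht).2, mul_comm (principalMinor A t)]
      rfl
    _ = minorPoly (principalMinor A) 1 univ := by
      rw [minorPoly, sum_powerset]
      rfl

theorem charpoly_diagonal_mul (d : ι → R) (A : Matrix ι ι R) :
    (diagonal d * A).charpoly = minorPoly (principalMinor A) d univ := by
  rw [charpoly_eq_minorPoly]
  refine sum_congr rfl fun t _ => ?_
  rw [principalMinor_diagonal_mul, mul_assoc, ← prod_mul_distrib]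
  simp

end PrincipalMinor

theorem hershkowitz_real_minors_general {ι K : Type*} [Fintype ι] [LinearOrder ι]
    [LocallyFiniteOrderBot ι] [CommRing K] [Nontrivial K] [Algebra ℝ K] (A : Matrix ι ι K)
    (hreal : ∀ S : Finset ι, S.Nonempty → principalMinor A S ∈ Set.range (algebraMap ℝ K))
    (hleading : ∀ k : ι, principalMinor A (Finset.Iic k) ∈ algebraMap ℝ K '' Set.Ioi 0) :
    ∃ d : ι → ℝ, (∀ i, 0 < d i) ∧
      ∃ μ : ι → ℝ, Injective μ ∧ (∀ i, 0 < μ i) ∧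
        (diagonal (fun i => algebraMap ℝ K (d i)) * A).charpoly =
          ∏ i, (X - C (algebraMap ℝ K (μ i))) := by
  have hinj : Injective (algebraMap ℝ K) := (algebraMap ℝ K).injective
  have hreal_all : ∀ S, ∃ x, algebraMap ℝ K x = principalMinor A S := fun S =>
    S.eq_empty_or_nonempty.elim (fun h => ⟨1, by rw [h, principalMinor_empty, map_one]⟩) (hreal S)
  choose m hm using hreal_all
  have hm_empty : m ∅ = 1 := hinj (by rw [hm, principalMinor_empty, map_one])
  have hm_pos : ∀ k ∈ (univ : Finset ι), 0 < m {i | i ≤ k} := fun k _ => by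
    obtain ⟨x, hx, hxk⟩ := hleading k
    rw [filter_ge_eq_Iic, hinj ((hm _).trans hxk.symm)]
    exact hx
  obtain ⟨d, hd, μ, hμinj, hμpos, hμ⟩ := exists_pos_hasSimplePosRoots_minorPoly hm_empty univ hm_pos
  refine ⟨d, hd, μ, by simpa using hμinj, by simpa using hμpos, ?_⟩
  calc (diagonal (fun i => algebraMap ℝ K (d i)) * A).charpoly
    _ = minorPoly (principalMinor A) (algebraMap ℝ K ∘ d) univ := charpoly_diagonal_mul _ A
    _ = (minorPoly m d univ).map (algebraMap ℝ K) := by rw [minorPoly_map, ← funext hm]; rfl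
    _ = ∏ i, (X - C (algebraMap ℝ K (μ i))) := by simp [hμ, nodal, Polynomial.map_prod]

/-- **Hershkowitz.** Let `A` be a complex square matrix with real principal
minors and positive leading principal minors. Then there exists a positive
real diagonal matrix `D` such that `D * A` has simple positive (real)
eigenvalues. -/
theorem hershkowitz_real_minors {n : ℕ} (A : Matrix (Fin n) (Fin n) ℂ)
    (hreal : ∀ S : Finset (Fin n), S.Nonempty →
      (A.submatrix (fun i : S => (i : Fin n)) (fun i : S => (i : Fin n))).det.im = 0)
    (hleading : ∀ k : Fin n,
      0 < (A.submatrix (Fin.castLE k.isLt) (Fin.castLE k.isLt)).det.re) :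
    ∃ d : Fin n → ℝ, (∀ i, 0 < d i) ∧
      ∃ μ : Fin n → ℝ, Function.Injective μ ∧ (∀ i, 0 < μ i) ∧
        (Matrix.diagonal (fun i => (d i : ℂ)) * A).charpoly = ∏ i, (X - C ((μ i : ℂ))) :=
  have hre (S : Finset (Fin n)) (hS : S.Nonempty) :
      ((principalMinor A S).re : ℂ) = principalMinor A S := Complex.ext rfl (hreal S hS).symm
  hershkowitz_real_minors_general A (fun S hS => ⟨_, hre S hS⟩) fun k =>
    ⟨_, by rw [Set.mem_Ioi, principalMinor_Iic]; exact hleading k, hre _ nonempty_Iic⟩
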